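/- arXiv:1906.03170 — 4 statements merged into one kernel-verified Lean document; each statement's English description precedes it below -/
import Mathlib

section
/- Let X ⊆ ℤⁿ be a digital image and k ≥ 3. Then the standard projection factors through the partial projection: ρ_k = ρ_{k−1} ∘ ρᶜ_k : S(X,k) → S(X,k−1) → X. -/
open Set

/-- The `k`-subdivision of a digital image `X ⊆ ℤⁿ`. -/
def Subdiv {n : ℕ} (X : Set (Fin n → ℤ)) (k : ℤ) : Set (Fin n → ℤ) :=
  { y | (fun i => (y i).fdiv k) ∈ X }

/-- The standard projection `ρ_k`, coordinatewise floor-division by `k`. -/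
def rho {n : ℕ} (k : ℤ) (y : Fin n → ℤ) : Fin n → ℤ := fun i => (y i).fdiv k

/-- One coordinate of the partial projection `ρᶜ_k`: the point `k*x + j`
(with `0 ≤ j ≤ k-1`) is sent to `(k-1)*x + j` if `j ≤ ⌊k/2⌋ - 1`, and to
`(k-1)*x + j - 1` if `⌊k/2⌋ ≤ j ≤ k-1`. -/
def rhoC1 (k y : ℤ) : ℤ :=
  if y % k ≤ k / 2 - 1 then (k - 1) * (y.fdiv k) + y % k
  else (k - 1) * (y.fdiv k) + y % k - 1

/-- The partial projection `ρᶜ_k : S(X,k) → S(X,k-1)`, defined coordinatewise. -/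
def rhoC {n : ℕ} (k : ℤ) (y : Fin n → ℤ) : Fin n → ℤ := fun i => rhoC1 k (y i)

/-! In each coordinate `ρᶜ_k` keeps the quotient of `y` by `k` and turns its remainder, which lies
in `[0, k)`, into a number in `[0, k - 1)`. So division of `ρᶜ_k(y)` by `k - 1` returns the same
quotient. -/

/-- The action of `ρᶜ_k` on remainders: `⌊k/2⌋` is identified with its predecessor and the larger
remainders are shifted down. Only its values on `[0, k)` are meaningful. -/
def collapseRemainder (k j : ℤ) : ℤ := if j ≤ k / 2 - 1 then j else j - 1

theorem rhoC1_eq_mul_add_collapseRemainder (k y : ℤ) :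
    rhoC1 k y = (k - 1) * y.fdiv k + collapseRemainder k (y % k) := by
  unfold rhoC1 collapseRemainder
  split_ifs
  · rfl
  · exact add_sub_assoc _ _ _

theorem collapseRemainder_mem_Ico {k j : ℤ} (hk : 2 ≤ k) (hj : j ∈ Ico 0 k) :
    collapseRemainder k j ∈ Ico 0 (k - 1) := by
  obtain ⟨hj_nonneg, hj_lt⟩ := hj
  have half_pos : 1 ≤ k / 2 := by lia
  have half_lt : k / 2 < k := by lia
  unfold collapseRemainder
  split_ifs with hj_half
  · exact ⟨hj_nonneg, by linarith⟩
  · exact ⟨by linarith, by linarith⟩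

theorem rhoC1_fdiv_sub_one {k : ℤ} (hk : 2 ≤ k) (y : ℤ) :
    (rhoC1 k y).fdiv (k - 1) = y.fdiv k := by
  have hy : y % k ∈ Ico 0 k := ⟨Int.emod_nonneg y (by lia), Int.emod_lt_of_pos y (by lia)⟩
  obtain ⟨h_nonneg, h_lt⟩ := collapseRemainder_mem_Ico hk hy
  rw [rhoC1_eq_mul_add_collapseRemainder, Int.mul_add_fdiv_left _ _ (by lia),
    Int.fdiv_eq_zero_of_lt h_nonneg h_lt, zero_add]

theorem rho_factors_through_rhoC_general {n : ℕ} {k : ℤ} (hk : 2 ≤ k) :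
    rho (n := n) (k - 1) ∘ rhoC k = rho k :=
  funext fun y => funext fun i => rhoC1_fdiv_sub_one hk (y i)

/-- for `k ≥ 3` the standard projection factors through the partial
projection: `ρ_k = ρ_{k-1} ∘ ρᶜ_k` on `S(X,k)`. -/
theorem rho_factors_through_rhoC {n : ℕ} (X : Set (Fin n → ℤ)) (hX : X.Finite)
    (k : ℤ) (hk : 3 ≤ k) :
    ∀ y ∈ Subdiv X k, rho (k - 1) (rhoC k y) = rho k y := by
  intro y _
  exact congrFun (rho_factors_through_rhoC_general (by lia)) y
end

section
/- Let γ : I_N → Y be a loop of length N in a digital image Y ⊆ ℤⁿ, with γ(0) = γ(N) = y₀ ∈ Y, and let k ≥ 2. Let k' = k if k is odd and k' = k+1 if k is even. Then for every point z₀ ∈ S(y₀, k) = ρ_k^{-1}(y₀) there exists a continuous map Γ : S(I_N, k') = I_{Nk'+k'−1} → S(Y, k) covering γ (i.e. ρ_k ∘ Γ = γ ∘ ρ_{k'}) such that Γ is a loop based at z₀: Γ(0) = Γ(Nk'+k'−1) = z₀. -/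
open Set

/-- Adjacency of points in `ℤⁿ`: all coordinates differ by at most 1. -/
def adj {n : ℕ} (x y : Fin n → ℤ) : Prop := ∀ i, |x i - y i| ≤ 1

/-!
Over each `q`, the cover spends `k'` consecutive times inside the cell `ρ_k⁻¹(γ q)`. A cell is a
cube of side `k`, so `k' ≥ k` times allow it to move at unit speed from any point of the cell to any
other. It therefore suffices to enter and leave each cell at points adjacent to points of the
neighbouring cells, except that the first cell is entered at the prescribed initial point and the
last one left at the prescribed final point.
-/

section Adjacency

variable {n : ℕ} {x y : Fin n → ℤ}

lemma adj_refl (x : Fin n → ℤ) : adj x x := fun i => by simp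

lemma adj_symm (h : adj x y) : adj y x := fun i => abs_sub_comm (x i) (y i) ▸ h i

/-- Continuity of the restriction of `γ` to the digital interval `I_N`, that is, of a path of
length `N`. The values of `γ` outside `I_N` are irrelevant. -/
def IsDigitalPath (N : ℤ) (γ : ℤ → Fin n → ℤ) : Prop :=
  ∀ i ∈ Icc (0 : ℤ) N, ∀ i' ∈ Icc (0 : ℤ) N, |i - i'| ≤ 1 → adj (γ i) (γ i')

lemma isDigitalPath_iff_adj_succ {N : ℤ} {γ : ℤ → Fin n → ℤ} :
    IsDigitalPath N γ ↔ ∀ i, 0 ≤ i → i < N → adj (γ i) (γ (i + 1)) := by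
  refine ⟨fun h i hi hiN => h i ⟨hi, hiN.le⟩ (i + 1) ⟨by omega, hiN⟩ (by simp), ?_⟩
  intro h i hi i' hi' hii'
  have hcases : i' = i ∨ i' = i + 1 ∨ i = i' + 1 := by
    have := abs_le.1 hii'
    omega
  rcases hcases with rfl | rfl | rfl
  · exact adj_refl _
  · exact h i hi.1 hi'.2
  · exact adj_symm (h i' hi'.1 hi.2)

end Adjacency

section Cells

variable {n : ℕ} {k : ℤ} {x y c : Fin n → ℤ}

lemma mem_Subdiv_iff {X : Set (Fin n → ℤ)} : y ∈ Subdiv X k ↔ rho k y ∈ X := Iff.rfl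

lemma rho_eq_iff (hk : 0 < k) :
    rho k y = c ↔ ∀ i, k * c i ≤ y i ∧ y i < k * c i + k := by
  refine funext_iff.trans (forall_congr' fun i => ?_)
  rw [rho, Int.fdiv_eq_ediv_of_nonneg _ hk.le, Int.ediv_eq_iff_of_pos hk, mul_comm (c i)]

lemma abs_sub_lt_of_rho_eq (hk : 0 < k) (hx : rho k x = c) (hy : rho k y = c) (i : Fin n) :
    |x i - y i| < k := by
  have hxi := (rho_eq_iff hk).1 hx i
  have hyi := (rho_eq_iff hk).1 hy i
  rw [abs_lt]
  omega

/-- The point at which a path leaves the cell `ρ_k⁻¹(x)` towards the cell of a neighbour `y` of `x`,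
and at which it enters the cell of `x` when coming from that of `y`: the last point of the cell in
the coordinates in which `y` exceeds `x`, and the first one in the others. -/
def gate (k : ℤ) (x y : Fin n → ℤ) : Fin n → ℤ :=
  fun i => if x i < y i then k * x i + (k - 1) else k * x i

lemma rho_gate (hk : 0 < k) (x y : Fin n → ℤ) : rho k (gate k x y) = x := by
  refine (rho_eq_iff hk).2 fun i => ?_
  unfold gate
  split_ifs <;> omega

lemma adj_gate (k : ℤ) (h : adj x y) : adj (gate k x y) (gate k y x) := by
  intro i
  have hcases : x i = y i ∨ y i = x i + 1 ∨ x i = y i + 1 := by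
    have := abs_le.1 (h i)
    omega
  rcases hcases with hi | hi | hi <;> simp [gate, hi, mul_add]

end Cells

section MoveToward

variable {n : ℕ} {k r : ℤ} {x y c : Fin n → ℤ}

/-- The position after `r` steps of the motion from `x` to `y` in which every coordinate moves at
unit speed and then stays at its target. It is meant for `0 ≤ r`. -/
def moveToward (x y : Fin n → ℤ) (r : ℤ) : Fin n → ℤ :=
  fun i => max (x i - r) (min (x i + r) (y i))

@[simp]
lemma moveToward_zero (x y : Fin n → ℤ) : moveToward x y 0 = x := by
  funext i
  simp [moveToward]

lemma moveToward_eq_right (h : ∀ i, |x i - y i| ≤ r) : moveToward x y r = y := by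
  funext i
  have := abs_le.1 (h i)
  unfold moveToward
  omega

lemma adj_moveToward_succ (x y : Fin n → ℤ) (r : ℤ) :
    adj (moveToward x y r) (moveToward x y (r + 1)) := by
  intro i
  unfold moveToward
  rw [abs_le]
  omega

lemma rho_moveToward (hk : 0 < k) (hr : 0 ≤ r) (hx : rho k x = c) (hy : rho k y = c) :
    rho k (moveToward x y r) = c := by
  refine (rho_eq_iff hk).2 fun i => ?_
  have hxi := (rho_eq_iff hk).1 hx i
  have hyi := (rho_eq_iff hk).1 hy i
  unfold moveToward
  omega

end MoveToward

section Cellwise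

variable {n : ℕ} {k m N q r : ℤ} {γ a b : ℤ → Fin n → ℤ}

/-- The path that, during the `q`-th block of `m` consecutive times, moves at unit speed from the
entry point `a q` to the exit point `b q`. -/
def cellwisePath (m : ℤ) (a b : ℤ → Fin n → ℤ) (j : ℤ) : Fin n → ℤ :=
  moveToward (a (j / m)) (b (j / m)) (j % m)

lemma cellwisePath_add_mul (hr : 0 ≤ r) (hrm : r < m) (a b : ℤ → Fin n → ℤ) (q : ℤ) :
    cellwisePath m a b (r + m * q) = moveToward (a q) (b q) r := by
  obtain ⟨hdiv, hmod⟩ := (Int.ediv_emod_unique (hr.trans_lt hrm)).2 ⟨rfl, hr, hrm⟩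
  rw [cellwisePath, hdiv, hmod]

lemma cellwisePath_block_start (hm : 0 < m) (a b : ℤ → Fin n → ℤ) (q : ℤ) :
    cellwisePath m a b (m * q) = a q := by
  simpa using cellwisePath_add_mul le_rfl hm a b q

lemma cellwisePath_block_end (hk : 0 < k) (hkm : k ≤ m) (ha : rho k (a q) = γ q)
    (hb : rho k (b q) = γ q) : cellwisePath m a b (m - 1 + m * q) = b q := by
  rw [cellwisePath_add_mul (by omega) (by omega)]
  refine moveToward_eq_right fun i => ?_
  have := abs_sub_lt_of_rho_eq hk ha hb i
  omega

lemma rho_cellwisePath (hk : 0 < k) (hm : 0 < m) (ha : ∀ q, rho k (a q) = γ q)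
    (hb : ∀ q, rho k (b q) = γ q) (j : ℤ) : rho k (cellwisePath m a b j) = γ (j.fdiv m) := by
  rw [Int.fdiv_eq_ediv_of_nonneg _ hm.le]
  exact rho_moveToward hk (Int.emod_nonneg j hm.ne') (ha _) (hb _)

lemma isDigitalPath_cellwisePath (hk : 0 < k) (hkm : k ≤ m) (ha : ∀ q, rho k (a q) = γ q)
    (hb : ∀ q, rho k (b q) = γ q) (hab : ∀ q, 0 ≤ q → q < N → adj (b q) (a (q + 1))) :
    IsDigitalPath (N * m + m - 1) (cellwisePath m a b) := by
  have hm : 0 < m := hk.trans_le hkm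
  refine isDigitalPath_iff_adj_succ.2 fun j hj hjN => ?_
  obtain ⟨q, r, hr, hrm, rfl⟩ : ∃ q r, 0 ≤ r ∧ r < m ∧ j = r + m * q :=
    ⟨j / m, j % m, Int.emod_nonneg j hm.ne', Int.emod_lt_of_pos j hm,
      (Int.emod_add_mul_ediv j m).symm⟩
  rcases (Int.add_one_le_of_lt hrm).lt_or_eq with hlt | hlast
  · rw [add_right_comm, cellwisePath_add_mul hr hrm, cellwisePath_add_mul (by omega) hlt]
    exact adj_moveToward_succ _ _ _
  · obtain rfl : r = m - 1 := by omega
    have hq : 0 ≤ q := by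
      by_contra! hq
      nlinarith
    have hqN : q < N := by
      by_contra! hqN
      nlinarith
    rw [cellwisePath_block_end hk hkm (ha q) (hb q),
      show m - 1 + m * q + 1 = m * (q + 1) by ring, cellwisePath_block_start hm]
    exact hab q hq hqN

end Cellwise

section Cover

variable {n : ℕ} {k N q : ℤ} {γ : ℤ → Fin n → ℤ} {z : Fin n → ℤ}

/-- The points at which the cover of `γ` that starts at `z` enters the cells `ρ_k⁻¹(γ q)`. -/
def entryPoint (k : ℤ) (γ : ℤ → Fin n → ℤ) (z : Fin n → ℤ) : ℤ → Fin n → ℤ :=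
  Function.update (fun q => gate k (γ q) (γ (q - 1))) 0 z

/-- The points at which the cover of `γ` that ends at `z`, at the last time of block `N`, leaves the
cells `ρ_k⁻¹(γ q)`. -/
def exitPoint (k N : ℤ) (γ : ℤ → Fin n → ℤ) (z : Fin n → ℤ) : ℤ → Fin n → ℤ :=
  Function.update (fun q => gate k (γ q) (γ (q + 1))) N z

lemma rho_update {a : ℤ → Fin n → ℤ} (ha : ∀ q, rho k (a q) = γ q) {p : ℤ}
    (hz : rho k z = γ p) (q : ℤ) : rho k (Function.update a p z q) = γ q := by
  obtain rfl | hq := eq_or_ne q p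
  · rwa [Function.update_self]
  · rw [Function.update_of_ne hq, ha]

lemma rho_entryPoint (hk : 0 < k) (hz : rho k z = γ 0) (q : ℤ) :
    rho k (entryPoint k γ z q) = γ q :=
  rho_update (fun _ => rho_gate hk _ _) hz q

lemma rho_exitPoint (hk : 0 < k) (hz : rho k z = γ N) (q : ℤ) :
    rho k (exitPoint k N γ z q) = γ q :=
  rho_update (fun _ => rho_gate hk _ _) hz q

lemma adj_exitPoint_entryPoint_succ (k : ℤ) (z₀ z₁ : Fin n → ℤ) (h : adj (γ q) (γ (q + 1)))
    (hq : 0 ≤ q) (hqN : q < N) : adj (exitPoint k N γ z₁ q) (entryPoint k γ z₀ (q + 1)) := by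
  rw [exitPoint, entryPoint, Function.update_of_ne hqN.ne, Function.update_of_ne (by omega),
    add_sub_cancel_right]
  exact adj_gate k h

end Cover

lemma fdiv_mem_Icc {N m j : ℤ} (hm : 0 < m) (hj : j ∈ Icc 0 (N * m + m - 1)) :
    j.fdiv m ∈ Icc 0 N := by
  rw [Int.fdiv_eq_ediv_of_nonneg _ hm.le]
  refine ⟨Int.ediv_nonneg hj.1 hm.le, Int.lt_add_one_iff.1 (Int.ediv_lt_of_lt_mul hm ?_)⟩
  linarith [hj.2]

theorem loop_cover_exists_general {n : ℕ} {Y : Set (Fin n → ℤ)} {N k k' : ℤ} (hk : 0 < k)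
    (hkk' : k ≤ k') {γ : ℤ → Fin n → ℤ} (hmaps : ∀ i ∈ Icc (0 : ℤ) N, γ i ∈ Y)
    (hcont : IsDigitalPath N γ) {z₀ z₁ : Fin n → ℤ} (hz₀ : rho k z₀ = γ 0)
    (hz₁ : rho k z₁ = γ N) :
    ∃ Γ : ℤ → Fin n → ℤ,
      (∀ j ∈ Icc (0 : ℤ) (N * k' + k' - 1), Γ j ∈ Subdiv Y k) ∧
      IsDigitalPath (N * k' + k' - 1) Γ ∧
      (∀ j ∈ Icc (0 : ℤ) (N * k' + k' - 1), rho k (Γ j) = γ (j.fdiv k')) ∧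
      Γ 0 = z₀ ∧ Γ (N * k' + k' - 1) = z₁ := by
  have hk' : 0 < k' := hk.trans_le hkk'
  have hentry := rho_entryPoint hk hz₀
  have hexit := rho_exitPoint hk hz₁
  have hcover := rho_cellwisePath hk hk' hentry hexit
  refine ⟨cellwisePath k' (entryPoint k γ z₀) (exitPoint k N γ z₁), fun j hj => ?_, ?_,
    fun j _ => hcover j, ?_, ?_⟩
  · rw [mem_Subdiv_iff, hcover]
    exact hmaps _ (fdiv_mem_Icc hk' hj)
  · refine isDigitalPath_cellwisePath hk hkk' hentry hexit fun q hq hqN => ?_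
    exact adj_exitPoint_entryPoint_succ k z₀ z₁ (isDigitalPath_iff_adj_succ.1 hcont q hq hqN) hq hqN
  · have hstart := cellwisePath_block_start hk' (entryPoint k γ z₀) (exitPoint k N γ z₁) 0
    rwa [mul_zero, entryPoint, Function.update_self] at hstart
  · have hend := cellwisePath_block_end hk hkk' (hentry N) (hexit N)
    rwa [show k' - 1 + k' * N = N * k' + k' - 1 by ring, exitPoint, Function.update_self] at hend

/-- let `γ : I_N → Y` be a loop based at `y₀`, `k ≥ 2`, and
`k' = k` if `k` is odd, `k' = k+1` if `k` is even.  Then for every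
`z₀ ∈ S(y₀,k)` there is a continuous map `Γ : S(I_N,k') = I_{Nk'+k'-1} → S(Y,k)`
covering `γ` which is a loop based at `z₀`. -/
theorem loop_cover_exists {n : ℕ} (Y : Set (Fin n → ℤ)) (hY : Y.Finite)
    (N k : ℤ) (hN : 1 ≤ N) (hk : 2 ≤ k)
    (k' : ℤ) (hk' : k' = if k % 2 = 1 then k else k + 1)
    (γ : ℤ → Fin n → ℤ) (y₀ : Fin n → ℤ)
    (hmaps : ∀ i ∈ Icc (0 : ℤ) N, γ i ∈ Y)
    (hcont : ∀ i ∈ Icc (0 : ℤ) N, ∀ i' ∈ Icc (0 : ℤ) N, |i - i'| ≤ 1 → adj (γ i) (γ i'))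
    (h0 : γ 0 = y₀) (hNend : γ N = y₀) :
    ∀ z₀ : Fin n → ℤ, rho k z₀ = y₀ →
      ∃ Γ : ℤ → Fin n → ℤ,
        (∀ j ∈ Icc (0 : ℤ) (N * k' + k' - 1), Γ j ∈ Subdiv Y k) ∧
        (∀ j ∈ Icc (0 : ℤ) (N * k' + k' - 1), ∀ j' ∈ Icc (0 : ℤ) (N * k' + k' - 1),
          |j - j'| ≤ 1 → adj (Γ j) (Γ j')) ∧
        (∀ j ∈ Icc (0 : ℤ) (N * k' + k' - 1), rho k (Γ j) = γ (j.fdiv k')) ∧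
        Γ 0 = z₀ ∧ Γ (N * k' + k' - 1) = z₀ := by
  intro z₀ hz₀
  have hkk' : k ≤ k' := by rw [hk']; split_ifs <;> omega
  exact loop_cover_exists_general (by omega) hkk' hmaps hcont (hz₀.trans h0.symm)
    (hz₀.trans hNend.symm)
end

section
/- Let k ≥ 1 and n ≥ 1, write 0̄ = k and 1̄ = 3k+1, and let C be the coordinate-centring function with iterates Cˢ. Let V ⊆ {0,1}² be nonempty and f : V → {0,1}ⁿ any function. Then there exists a continuous map F : [0̄,1̄]² ∩ S(V, 2k+1) → [0̄,1̄]ⁿ such that: (i) ρ_{2k+1} ∘ F = f ∘ ρ_{2k+1} on the domain; (ii) for each v = (v₁,v₂) ∈ V and 0 ≤ s ≤ k, F(Cˢ(v̄₁), v̄₂) = \overline{f(v)} + s·(f(1−v₁,v₂) − f(v)) if (1−v₁,v₂) ∈ V, and F(Cˢ(v̄₁), v̄₂) = \overline{f(v)} if (1−v₁,v₂) ∉ V; (iii) for each v = (v₁,v₂) ∈ V and 0 ≤ t ≤ k, F(v̄₁, Cᵗ(v̄₂)) = \overline{f(v)} + t·(f(v₁,1−v₂) − f(v)) if (v₁,1−v₂)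 ∈ V, and F(v̄₁, Cᵗ(v̄₂)) = \overline{f(v)} if (v₁,1−v₂) ∉ V; and (iv) F maps [0̄,1̄]² ∩ S(v, 2k+1) into [0̄,1̄]ⁿ ∩ S(f(v), 2k+1) for each v ∈ V. -/
/-!
Let the block of `v` be the set of lattice points `p` with `ρ_{2k+1}(p) = v`; it is the sup-norm
ball of radius `k` about `v̄`. Fix a coordinate `i`. For `p` in the block of `v`, place `F(p)ᵢ` in
the half-interval of `f(v)ᵢ`, at a distance from the other half-interval equal to the sup-norm
distance, capped at `k + 1`, from `p` to the blocks whose `i`-th label differs from `f(v)ᵢ`. This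
distance is 1-Lipschitz, and adjacent points with different labels both have distance 1, so they
are sent to the adjacent points `2k` and `2k + 1`. On the segment of length `k`
from `v̄` in direction `±eⱼ`, the only other block that comes within distance `k` is that of
`v ± eⱼ`, which gives the values on outer edges.
-/

open Set

/-- The centre `ī = (2k+1)i + k`; so `0̄ = k` and `1̄ = 3k+1`. -/
def bar (k i : ℤ) : ℤ := (2 * k + 1) * i + k

/-- The coordinate-centring function `C` on `[k, 3k+1] ∩ ℤ`. -/
def centreFn (k x : ℤ) : ℤ :=
  if x ≤ 2 * k - 1 then x + 1 else if x ≤ 2 * k + 1 then x else x - 1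

/-- The sup-norm distance from `p` to `T`, capped at `R`; it equals `R` when `T` is empty. -/
noncomputable def cappedDist {m : ℕ} (R : ℕ) (T : Set (Fin m → ℤ)) (p : Fin m → ℤ) : ℕ :=
  sInf {r : ℕ | R ≤ r ∨ ∃ y ∈ T, ∀ j, |p j - y j| ≤ r}

section CappedDist

variable {m R r : ℕ} {T : Set (Fin m → ℤ)} {p q : Fin m → ℤ}

theorem cappedDist_le_iff :
    cappedDist R T p ≤ r ↔ R ≤ r ∨ ∃ y ∈ T, ∀ j, |p j - y j| ≤ r := by
  refine ⟨fun h => ?_, fun h => Nat.sInf_le h⟩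
  have hmem : R ≤ cappedDist R T p ∨ ∃ y ∈ T, ∀ j, |p j - y j| ≤ cappedDist R T p :=
    Nat.sInf_mem (s := {r : ℕ | R ≤ r ∨ ∃ y ∈ T, ∀ j, |p j - y j| ≤ r}) ⟨R, Or.inl le_rfl⟩
  exact hmem.imp (fun hR => hR.trans h) fun ⟨y, hy, hpy⟩ =>
    ⟨y, hy, fun j => (hpy j).trans (by exact_mod_cast h)⟩

theorem cappedDist_le : cappedDist R T p ≤ R :=
  cappedDist_le_iff.2 (Or.inl le_rfl)

theorem cappedDist_pos (hR : 0 < R) (hp : p ∉ T) : 0 < cappedDist R T p := by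
  by_contra! h
  rcases cappedDist_le_iff.1 h with h0 | ⟨y, hy, hpy⟩
  · omega
  · have : p = y := funext fun j => by
      simpa [sub_eq_zero] using hpy j
    exact hp (this ▸ hy)

theorem cappedDist_le_one_of_adj (hq : q ∈ T) (h : adj p q) : cappedDist R T p ≤ 1 :=
  cappedDist_le_iff.2 (Or.inr ⟨q, hq, by exact_mod_cast h⟩)

theorem adj.symm (h : adj p q) : adj q p := fun j => abs_sub_comm (p j) (q j) ▸ h j

theorem cappedDist_le_add_one_of_adj (h : adj p q) :
    cappedDist R T p ≤ cappedDist R T q + 1 := by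
  rcases cappedDist_le_iff.1 (le_refl (cappedDist R T q)) with hR | ⟨y, hy, hqy⟩
  · exact cappedDist_le.trans (by omega)
  · refine cappedDist_le_iff.2 (Or.inr ⟨y, hy, fun j => ?_⟩)
    calc |p j - y j| ≤ |p j - q j| + |q j - y j| := abs_sub_le _ _ _
      _ ≤ 1 + cappedDist R T q := add_le_add (h j) (hqy j)
      _ = (cappedDist R T q + 1 : ℕ) := by push_cast; ring

end CappedDist

theorem fdiv_eq_iff_abs_sub_bar_le {k : ℕ} {x a : ℤ} :
    x.fdiv (2 * k + 1) = a ↔ |x - bar k a| ≤ k := by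
  rw [Int.fdiv_eq_ediv_of_nonneg _ (by omega), Int.ediv_eq_iff_of_pos (by omega), abs_le, bar]
  constructor <;> rintro ⟨h₁, h₂⟩ <;> constructor <;> linarith

/-- One coordinate of the extension, for a `0/1`-valued label `g` on a set `U` of lattice points.
The value lies in the half-interval of the label of `p`, and its distance to the half-interval of
the other label is the capped distance from `p` to the points of `U` with the other label. -/
noncomputable def labelExtension {m : ℕ} (k : ℕ) (U : Set (Fin m → ℤ)) (g : (Fin m → ℤ) → ℤ)
    (p : Fin m → ℤ) : ℤ :=
  bar k (g p) + (1 - 2 * g p) * (k + 1 - cappedDist (k + 1) {y ∈ U | g y ≠ g p} p)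

section LabelExtension

variable {m k : ℕ} {U : Set (Fin m → ℤ)} {g : (Fin m → ℤ) → ℤ} {p q : Fin m → ℤ}

theorem cappedDist_other_label_mem_Icc :
    cappedDist (k + 1) {y ∈ U | g y ≠ g p} p ∈ Icc 1 (k + 1) :=
  ⟨cappedDist_pos k.succ_pos fun h => h.2 rfl, cappedDist_le⟩

theorem labelExtension_mem_Icc (hp : g p = 0 ∨ g p = 1) :
    labelExtension k U g p ∈ Icc (k : ℤ) (3 * k + 1) := by
  obtain ⟨h₁, h₂⟩ := cappedDist_other_label_mem_Icc (k := k) (U := U) (g := g) (p := p)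
  unfold labelExtension bar
  rcases hp with h | h <;> rw [h] at h₁ h₂ ⊢ <;> constructor <;> omega

theorem fdiv_labelExtension (hp : g p = 0 ∨ g p = 1) :
    (labelExtension k U g p).fdiv (2 * k + 1) = g p := by
  obtain ⟨h₁, h₂⟩ := cappedDist_other_label_mem_Icc (k := k) (U := U) (g := g) (p := p)
  rw [fdiv_eq_iff_abs_sub_bar_le, labelExtension, add_sub_cancel_left, abs_le]
  rcases hp with h | h <;> rw [h] at h₁ h₂ ⊢ <;> constructor <;> omega

theorem abs_labelExtension_sub_le_one_of_label_eq (hp : g p = 0 ∨ g p = 1) (hpq : g p = g q)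
    (h : adj p q) : |labelExtension k U g p - labelExtension k U g q| ≤ 1 := by
  have h₁ := cappedDist_le_add_one_of_adj (R := k + 1) (T := {y ∈ U | g y ≠ g q}) h
  have h₂ := cappedDist_le_add_one_of_adj (R := k + 1) (T := {y ∈ U | g y ≠ g q}) h.symm
  rw [labelExtension, labelExtension, abs_le, hpq]
  rcases hpq ▸ hp with hq | hq <;> rw [hq] at h₁ h₂ ⊢ <;> constructor <;> omega

theorem labelExtension_eq_of_adj_of_label_ne (hq : q ∈ U) (hpq : g q ≠ g p) (h : adj p q) :
    labelExtension k U g p = bar k (g p) + (1 - 2 * g p) * k := by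
  have hle : cappedDist (k + 1) {y ∈ U | g y ≠ g p} p ≤ 1 := cappedDist_le_one_of_adj ⟨hq, hpq⟩ h
  rw [labelExtension, le_antisymm hle cappedDist_other_label_mem_Icc.1]
  push_cast
  ring

theorem abs_labelExtension_sub_le_one (hpU : p ∈ U) (hqU : q ∈ U) (hp : g p = 0 ∨ g p = 1)
    (hq : g q = 0 ∨ g q = 1) (h : adj p q) :
    |labelExtension k U g p - labelExtension k U g q| ≤ 1 := by
  by_cases hpq : g p = g q
  · exact abs_labelExtension_sub_le_one_of_label_eq hp hpq h
  · rw [labelExtension_eq_of_adj_of_label_ne hqU (Ne.symm hpq) h,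
      labelExtension_eq_of_adj_of_label_ne hpU hpq h.symm, abs_le]
    unfold bar
    rcases hp with hp | hp <;> rcases hq with hq | hq <;> rw [hp, hq] <;> omega

end LabelExtension

/-- The lattice point at distance `s` from the centre `v̄` of the block of `v`, in the direction
`e = ±1` of the `j`-th axis. -/
def edgePoint {m : ℕ} (k : ℤ) (v : Fin m → ℤ) (j : Fin m) (e s : ℤ) : Fin m → ℤ :=
  Function.update (fun l => bar k (v l)) j (bar k (v j) + e * s)

section EdgePoint

variable {m k s r : ℕ} {v y : Fin m → ℤ} {j : Fin m} {e : ℤ}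

theorem rho_edgePoint (he : e = 1 ∨ e = -1) (hs : s ≤ k) :
    rho (2 * k + 1) (edgePoint k v j e s) = v := by
  funext l
  rw [rho, fdiv_eq_iff_abs_sub_bar_le, edgePoint, Function.update_apply, abs_le]
  split_ifs with hl
  · subst hl
    rcases he with rfl | rfl <;> omega
  · omega

theorem rho_edgePoint_succ (he : e = 1 ∨ e = -1) :
    rho (2 * k + 1) (edgePoint k v j e (k + 1)) = Function.update v j (v j + e) := by
  funext l
  rw [rho, fdiv_eq_iff_abs_sub_bar_le, edgePoint, Function.update_apply, Function.update_apply,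
    abs_le]
  split_ifs with hl
  · unfold bar
    rcases he with rfl | rfl <;> constructor <;> linarith
  · omega

theorem abs_edgePoint_sub_edgePoint_le {t : ℕ} (he : e = 1 ∨ e = -1) (hst : s ≤ t) (l : Fin m) :
    |edgePoint k v j e s l - edgePoint k v j e t l| ≤ (t - s : ℕ) := by
  rw [edgePoint, edgePoint, Function.update_apply, Function.update_apply, abs_le]
  split_ifs
  · rcases he with rfl | rfl <;> omega
  · omega

theorem fdiv_eq_or_of_abs_bar_add_sub_le {a x : ℤ} (he : e = 1 ∨ e = -1) (hs : s ≤ k) (hr : r ≤ k)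
    (h : |bar k a + e * s - x| ≤ r) :
    x.fdiv (2 * k + 1) = a ∨ x.fdiv (2 * k + 1) = a + e ∧ k + 1 ≤ s + r := by
  rw [fdiv_eq_iff_abs_sub_bar_le, fdiv_eq_iff_abs_sub_bar_le]
  have hbar : bar k (a + e) = bar k a + (2 * k + 1) * e := by unfold bar; ring
  rw [hbar]
  simp only [abs_le] at *
  rcases he with rfl | rfl <;> omega

theorem rho_eq_or_of_abs_edgePoint_sub_le (he : e = 1 ∨ e = -1) (hs : s ≤ k) (hr : r ≤ k)
    (h : ∀ l, |edgePoint k v j e s l - y l| ≤ r) :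
    rho (2 * k + 1) y = v ∨
      rho (2 * k + 1) y = Function.update v j (v j + e) ∧ k + 1 ≤ s + r := by
  have hne : ∀ l ≠ j, rho (2 * k + 1) y l = v l := fun l hl => by
    have hl' := h l
    rw [edgePoint, Function.update_of_ne hl, abs_sub_comm] at hl'
    exact fdiv_eq_iff_abs_sub_bar_le.2 (hl'.trans (by exact_mod_cast hr))
  have hj := h j
  rw [edgePoint, Function.update_self] at hj
  refine (fdiv_eq_or_of_abs_bar_add_sub_le he hs hr hj).imp (fun hj => ?_)
    (And.imp_left fun hj => ?_)
  · rw [← Function.update_eq_self j v]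
    exact Function.eq_update_iff.2 ⟨hj, hne⟩
  · exact Function.eq_update_iff.2 ⟨hj, hne⟩

variable {V : Set (Fin m → ℤ)} {g : (Fin m → ℤ) → ℤ}

theorem cappedDist_edgePoint_of_ne (he : e = 1 ∨ e = -1) (hs : s ≤ k)
    (hV : Function.update v j (v j + e) ∈ V) (hg : g (Function.update v j (v j + e)) ≠ g v) :
    cappedDist (k + 1) {y ∈ rho (2 * k + 1) ⁻¹' V | g (rho (2 * k + 1) y) ≠ g v}
      (edgePoint k v j e s) = k + 1 - s := by
  refine eq_of_forall_ge_iff fun r => cappedDist_le_iff.trans ⟨?_, fun hr => Or.inr ?_⟩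
  · rintro (hr | ⟨y, ⟨-, hy⟩, hyr⟩)
    · omega
    · by_contra! hlt
      rcases rho_eq_or_of_abs_edgePoint_sub_le he hs (by omega) hyr with hv | ⟨-, hsr⟩
      · exact hy (congrArg g hv)
      · omega
  · have hrho := rho_edgePoint_succ (k := k) (v := v) (j := j) he
    refine ⟨edgePoint k v j e (k + 1), ⟨?_, ?_⟩, fun l => ?_⟩
    · rwa [mem_preimage, hrho]
    · rwa [hrho]
    · have hl := abs_edgePoint_sub_edgePoint_le (k := k) (v := v) (j := j)
        he (Nat.le_succ_of_le hs) l
      push_cast at hl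
      omega

theorem cappedDist_edgePoint_of_eq (he : e = 1 ∨ e = -1) (hs : s ≤ k)
    (h : Function.update v j (v j + e) ∈ V → g (Function.update v j (v j + e)) = g v) :
    cappedDist (k + 1) {y ∈ rho (2 * k + 1) ⁻¹' V | g (rho (2 * k + 1) y) ≠ g v}
      (edgePoint k v j e s) = k + 1 := by
  refine le_antisymm cappedDist_le ?_
  by_contra! hlt
  rcases cappedDist_le_iff.1 (Nat.le_of_lt_succ hlt) with hk | ⟨y, ⟨hyV, hy⟩, hyk⟩
  · omega
  · rcases rho_eq_or_of_abs_edgePoint_sub_le he hs le_rfl hyk with hv | ⟨hv, -⟩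
    · exact hy (congrArg g hv)
    · rw [mem_preimage, hv] at hyV
      rw [hv] at hy
      exact hy (h hyV)

theorem labelExtension_edgePoint_of_mem (he : e = 1 ∨ e = -1) (hs : s ≤ k)
    (hg : ∀ w ∈ V, g w = 0 ∨ g w = 1) (hv : v ∈ V) (hw : Function.update v j (v j + e) ∈ V) :
    labelExtension k (rho (2 * k + 1) ⁻¹' V) (fun y => g (rho (2 * k + 1) y))
      (edgePoint k v j e s) = bar k (g v) + s * (g (Function.update v j (v j + e)) - g v) := by
  rw [labelExtension, rho_edgePoint he hs]
  by_cases h : g (Function.update v j (v j + e)) = g v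
  · rw [cappedDist_edgePoint_of_eq he hs fun _ => h, h]
    push_cast
    ring
  · have hopp : g (Function.update v j (v j + e)) - g v = 1 - 2 * g v := by
      have := hg v hv
      have := hg _ hw
      omega
    rw [cappedDist_edgePoint_of_ne he hs hw h, hopp, Nat.cast_sub (Nat.le_succ_of_le hs)]
    push_cast
    ring

theorem labelExtension_edgePoint_of_notMem (he : e = 1 ∨ e = -1) (hs : s ≤ k)
    (hw : Function.update v j (v j + e) ∉ V) :
    labelExtension k (rho (2 * k + 1) ⁻¹' V) (fun y => g (rho (2 * k + 1) y))
      (edgePoint k v j e s) = bar k (g v) := by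
  rw [labelExtension, rho_edgePoint he hs, cappedDist_edgePoint_of_eq he hs fun h => absurd h hw]
  push_cast
  ring

end EdgePoint

theorem iterate_centreFn_bar {k a : ℤ} (ha : a = 0 ∨ a = 1) {s : ℕ} (hs : s ≤ k) :
    (centreFn k)^[s] (bar k a) = bar k a + (1 - 2 * a) * s := by
  induction s with
  | zero => simp
  | succ s ih =>
    rw [Function.iterate_succ_apply', ih (by omega)]
    unfold centreFn bar
    rcases ha with rfl | rfl <;> split_ifs <;> omega

theorem cons_iterate_centreFn_bar {k a b : ℤ} (ha : a = 0 ∨ a = 1) {s : ℕ} (hs : s ≤ k) :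
    ![(centreFn k)^[s] (bar k a), bar k b] = edgePoint k ![a, b] 0 (1 - 2 * a) s := by
  rw [iterate_centreFn_bar ha hs]
  funext l
  fin_cases l <;> rfl

theorem cons_bar_iterate_centreFn {k a b : ℤ} (hb : b = 0 ∨ b = 1) {t : ℕ} (ht : t ≤ k) :
    ![bar k a, (centreFn k)^[t] (bar k b)] = edgePoint k ![a, b] 1 (1 - 2 * b) t := by
  rw [iterate_centreFn_bar hb ht]
  funext l
  fin_cases l <;> rfl

theorem quadrant_extension_general_general {m n : ℕ} (k : ℕ) (V : Set (Fin m → ℤ))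
    (f : (Fin m → ℤ) → Fin n → ℤ) (hf : ∀ v ∈ V, ∀ i, f v i = 0 ∨ f v i = 1) :
    ∃ F : (Fin m → ℤ) → Fin n → ℤ,
      (∀ p, rho (2 * k + 1) p ∈ V → rho (2 * k + 1) (F p) = f (rho (2 * k + 1) p)) ∧
      (∀ p p', rho (2 * k + 1) p ∈ V → rho (2 * k + 1) p' ∈ V → adj p p' → adj (F p) (F p')) ∧
      (∀ v ∈ V, ∀ j, ∀ e : ℤ, e = 1 ∨ e = -1 → ∀ s : ℕ, s ≤ k →
        (Function.update v j (v j + e) ∈ V → F (edgePoint k v j e s) = fun i =>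
          bar k (f v i) + s * (f (Function.update v j (v j + e)) i - f v i)) ∧
        (Function.update v j (v j + e) ∉ V → F (edgePoint k v j e s) = fun i =>
          bar k (f v i))) ∧
      (∀ p, rho (2 * k + 1) p ∈ V → ∀ i, F p i ∈ Icc (k : ℤ) (3 * k + 1)) :=
  ⟨fun p i => labelExtension k (rho (2 * k + 1) ⁻¹' V) (fun y => f (rho (2 * k + 1) y) i) p,
    fun _ hp => funext fun i => fdiv_labelExtension (hf _ hp i),
    fun _ _ hp hp' h i => abs_labelExtension_sub_le_one hp hp' (hf _ hp i) (hf _ hp' i) h,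
    fun _ hv _ _ he _ hs =>
      ⟨fun hw => funext fun i =>
        labelExtension_edgePoint_of_mem (g := (f · i)) he hs (fun w hw => hf w hw i) hv hw,
      fun hw => funext fun i => labelExtension_edgePoint_of_notMem (g := (f · i)) he hs hw⟩,
    fun _ hp i => labelExtension_mem_Icc (hf _ hp i)⟩

/-- for any nonempty `V ⊆ {0,1}²` and any `f : V → {0,1}ⁿ` there is a
continuous map `F : [0̄,1̄]² ∩ S(V,2k+1) → [0̄,1̄]ⁿ` covering `f`, whose values on the
outer edges of each quadrant interpolate toward present neighbours of `V` (and are the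
centre `\overline{f(v)}` in the direction of absent neighbours), and which maps the
quadrant of each `v ∈ V` into the orthant `[0̄,1̄]ⁿ ∩ S(f(v),2k+1)`. -/
theorem quadrant_extension_general {n : ℕ} (hn : 1 ≤ n) (k : ℤ) (hk : 1 ≤ k)
    (V : Set (ℤ × ℤ)) (hVsub : V ⊆ ({0, 1} : Set ℤ) ×ˢ ({0, 1} : Set ℤ))
    (hVne : V.Nonempty)
    (f : ℤ × ℤ → Fin n → ℤ)
    (hf : ∀ v ∈ V, ∀ i, f v i = 0 ∨ f v i = 1) :
    ∃ F : ℤ → ℤ → Fin n → ℤ,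
      -- (i) ρ_{2k+1} ∘ F = f ∘ ρ_{2k+1} on [0̄,1̄]² ∩ S(V, 2k+1)
      (∀ p ∈ Icc k (3 * k + 1), ∀ q ∈ Icc k (3 * k + 1),
        (p.fdiv (2 * k + 1), q.fdiv (2 * k + 1)) ∈ V →
        rho (2 * k + 1) (F p q) = f (p.fdiv (2 * k + 1), q.fdiv (2 * k + 1))) ∧
      -- F is continuous on [0̄,1̄]² ∩ S(V, 2k+1)
      (∀ p ∈ Icc k (3 * k + 1), ∀ q ∈ Icc k (3 * k + 1),
        ∀ p' ∈ Icc k (3 * k + 1), ∀ q' ∈ Icc k (3 * k + 1),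
        (p.fdiv (2 * k + 1), q.fdiv (2 * k + 1)) ∈ V →
        (p'.fdiv (2 * k + 1), q'.fdiv (2 * k + 1)) ∈ V →
        |p - p'| ≤ 1 → |q - q'| ≤ 1 → adj (F p q) (F p' q')) ∧
      -- (ii) horizontal outer edges
      (∀ v ∈ V, ∀ s : ℕ, (s : ℤ) ≤ k →
        ((1 - v.1, v.2) ∈ V →
          F ((centreFn k)^[s] (bar k v.1)) (bar k v.2) = fun i =>
            ((2 * k + 1) * f v i + k) + (s : ℤ) * (f (1 - v.1, v.2) i - f v i)) ∧
        ((1 - v.1, v.2) ∉ V →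
          F ((centreFn k)^[s] (bar k v.1)) (bar k v.2) = fun i =>
            (2 * k + 1) * f v i + k)) ∧
      -- (iii) vertical outer edges
      (∀ v ∈ V, ∀ t : ℕ, (t : ℤ) ≤ k →
        ((v.1, 1 - v.2) ∈ V →
          F (bar k v.1) ((centreFn k)^[t] (bar k v.2)) = fun i =>
            ((2 * k + 1) * f v i + k) + (t : ℤ) * (f (v.1, 1 - v.2) i - f v i)) ∧
        ((v.1, 1 - v.2) ∉ V →
          F (bar k v.1) ((centreFn k)^[t] (bar k v.2)) = fun i =>
            (2 * k + 1) * f v i + k)) ∧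
      -- (iv) each quadrant lands in the corresponding orthant of the cube
      (∀ v ∈ V, ∀ p ∈ Icc k (3 * k + 1), ∀ q ∈ Icc k (3 * k + 1),
        (p.fdiv (2 * k + 1), q.fdiv (2 * k + 1)) = v →
        ∀ i, F p q i ∈ Icc k (3 * k + 1) ∧ (F p q i).fdiv (2 * k + 1) = f v i) := by
  lift k to ℕ using by omega
  have hflip (a : ℤ) : a + (1 - 2 * a) = 1 - a := by ring
  have hsign (a : ℤ) (ha : a = 0 ∨ a = 1) : 1 - 2 * a = 1 ∨ 1 - 2 * a = -1 := by omega
  obtain ⟨F, hcover, hadj, hedge, hcube⟩ := quadrant_extension_general_general k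
    {v : Fin 2 → ℤ | (v 0, v 1) ∈ V} (fun v => f (v 0, v 1)) (fun v hv => hf _ hv)
  refine ⟨fun p q => F ![p, q], fun p _ q _ h => hcover _ h,
    fun p _ q _ p' _ q' _ h h' hp hq => hadj _ _ h h' (Fin.forall_fin_two.2 ⟨hp, hq⟩),
    fun v hv s hs => ?_, fun v hv t ht => ?_, ?_⟩
  · have ha : v.1 = 0 ∨ v.1 = 1 := (hVsub hv).1
    have h := hedge ![v.1, v.2] hv 0 _ (hsign _ ha) s (by omega)
    beta_reduce
    rw [cons_iterate_centreFn_bar ha hs]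
    simpa [hflip, bar] using h
  · have hb : v.2 = 0 ∨ v.2 = 1 := (hVsub hv).2
    have h := hedge ![v.1, v.2] hv 1 _ (hsign _ hb) t (by omega)
    beta_reduce
    rw [cons_bar_iterate_centreFn hb ht]
    simpa [hflip, bar] using h
  · rintro _ hv p - q - rfl i
    exact ⟨hcube ![p, q] hv i, congrFun (hcover ![p, q] hv) i⟩
end

section
/- Let f : X → Y be a continuous map of digital images, where X ⊆ ℤ² and Y ⊆ ℤⁿ, and let k ≥ 2. Then there exists a continuous map F : S(X, k+1) → S(Y, k) covering f, i.e. ρ_k ∘ F = f ∘ ρ_{k+1} : S(X, k+1) → Y. -/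
open Set

/-! Coordinatewise, a cover is an integer function `φ` on `S(X, k + 1)` with `k G ≤ φ < k (G + 1)`
that changes by at most 1 between adjacent points, where `G` is a coordinate of `f ∘ ρ_{k+1}`.
Points at distance at most `k + 1` have adjacent projections, so `G` changes by at most 1 over that
distance. Hence the McShane-type infimum over `dist p q ≤ k + 1` of the cones
`p ↦ k (G q + 1) - 1 + dist p q` lies in the required range. A minimizing `q` is even within
distance `k` of `p`, so it still competes at every neighbour of `p`, which gives the Lipschitz
bound. -/

section ConeInf

variable {α : Type*} [MetricSpace α]

/-- The value at `p` of the cone of slope 1 with apex at `q`, the apex being as high as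
`k * G q ≤ φ q < k * (G q + 1)` allows for an integer `φ q`. Distances are rounded up to stay
in `ℤ`. -/
noncomputable def cone (k : ℤ) (G : α → ℤ) (p q : α) : ℤ := k * (G q + 1) - 1 + ⌈dist p q⌉

/-- The lower envelope at `p` of the cones with apex in `S`, which yields one coordinate of a cover.
Only apexes within `k + 1` of `p` count, as `G` is not controlled over larger distances. -/
noncomputable def coneInf (S : Set α) (k : ℤ) (G : α → ℤ) (p : α) : ℤ :=
  sInf (cone k G p '' (S ∩ Metric.closedBall p (k + 1)))

variable {S : Set α} {k : ℤ} {G : α → ℤ} {p p' q : α}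

lemma cone_self : cone k G p p = k * (G p + 1) - 1 := by
  simp only [cone, dist_self, Int.ceil_zero, add_zero]

lemma cone_le_cone_add_one (h : dist p p' ≤ 1) : cone k G p q ≤ cone k G p' q + 1 := by
  have hceil : ⌈dist p q⌉ ≤ ⌈dist p' q⌉ + 1 := by
    rw [Int.ceil_le, Int.cast_add, Int.cast_one]
    linarith [dist_triangle p p' q, Int.le_ceil (dist p' q)]
  simp only [cone]
  linarith

lemma mul_le_cone (hk : 1 ≤ k) (hG : G p ≤ G q + 1) : k * G p ≤ cone k G p q := by
  rcases eq_or_ne p q with rfl | hpq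
  · rw [cone_self]
    linarith
  · have hdist : 1 ≤ ⌈dist p q⌉ := Int.ceil_pos.mpr (dist_pos.mpr hpq)
    have hapex : k * G p ≤ k * (G q + 1) := mul_le_mul_of_nonneg_left hG (by linarith)
    simp only [cone]
    linarith

lemma dist_le_of_cone_lt (hk : 0 ≤ k) (hG : G p ≤ G q + 1)
    (h : cone k G p q < k * (G p + 1)) : dist p q ≤ k := by
  have hapex : k * G p ≤ k * (G q + 1) := mul_le_mul_of_nonneg_left hG hk
  simp only [cone] at h
  exact Int.ceil_le.mp (by linarith)

lemma mem_inter_closedBall_self (hk : 0 ≤ k) (hp : p ∈ S) :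
    p ∈ S ∩ Metric.closedBall p (k + 1) :=
  ⟨hp, Metric.mem_closedBall_self (by exact_mod_cast Int.add_nonneg hk zero_le_one)⟩

lemma isLeast_coneInf (hk : 1 ≤ k)
    (hG : ∀ p ∈ S, ∀ q ∈ S, dist p q ≤ k + 1 → G p ≤ G q + 1) (hp : p ∈ S) :
    IsLeast (cone k G p '' (S ∩ Metric.closedBall p (k + 1))) (coneInf S k G p) := by
  have hne : (S ∩ Metric.closedBall p (k + 1)).Nonempty :=
    ⟨p, mem_inter_closedBall_self (by linarith) hp⟩
  have hbdd : BddBelow (cone k G p '' (S ∩ Metric.closedBall p (k + 1))) := by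
    refine ⟨k * G p, ?_⟩
    rintro _ ⟨q, ⟨hq, hqp⟩, rfl⟩
    exact mul_le_cone hk (hG p hp q hq (Metric.mem_closedBall'.mp hqp))
  exact ⟨Int.csInf_mem (hne.image _) hbdd, fun _ hz => csInf_le hbdd hz⟩

lemma coneInf_mem_Ico (hk : 1 ≤ k)
    (hG : ∀ p ∈ S, ∀ q ∈ S, dist p q ≤ k + 1 → G p ≤ G q + 1) (hp : p ∈ S) :
    coneInf S k G p ∈ Ico (k * G p) (k * (G p + 1)) := by
  obtain ⟨⟨q, ⟨hq, hqp⟩, hmin⟩, hle⟩ := isLeast_coneInf hk hG hp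
  constructor
  · rw [← hmin]
    exact mul_le_cone hk (hG p hp q hq (Metric.mem_closedBall'.mp hqp))
  · have hself : coneInf S k G p ≤ cone k G p p :=
      hle ⟨p, mem_inter_closedBall_self (by linarith) hp, rfl⟩
    rw [cone_self] at hself
    linarith

lemma coneInf_le_coneInf_add_one (hk : 1 ≤ k)
    (hG : ∀ p ∈ S, ∀ q ∈ S, dist p q ≤ k + 1 → G p ≤ G q + 1) (hp : p ∈ S) (hp' : p' ∈ S)
    (h : dist p p' ≤ 1) : coneInf S k G p ≤ coneInf S k G p' + 1 := by
  obtain ⟨q, ⟨hq, hqp'⟩, hmin⟩ := (isLeast_coneInf hk hG hp').1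
  have hnear : dist p' q ≤ k := by
    refine dist_le_of_cone_lt (by linarith) (hG p' hp' q hq (Metric.mem_closedBall'.mp hqp')) ?_
    rw [hmin]
    exact (coneInf_mem_Ico hk hG hp').2
  have hqp : q ∈ Metric.closedBall p (k + 1) :=
    Metric.mem_closedBall'.mpr (by linarith [dist_triangle p p' q])
  calc coneInf S k G p ≤ cone k G p q := (isLeast_coneInf hk hG hp).2 ⟨q, ⟨hq, hqp⟩, rfl⟩
    _ ≤ cone k G p' q + 1 := cone_le_cone_add_one h
    _ = coneInf S k G p' + 1 := by rw [hmin]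

lemma abs_coneInf_sub_le_one (hk : 1 ≤ k)
    (hG : ∀ p ∈ S, ∀ q ∈ S, dist p q ≤ k + 1 → G p ≤ G q + 1) (hp : p ∈ S) (hp' : p' ∈ S)
    (h : dist p p' ≤ 1) : |coneInf S k G p - coneInf S k G p'| ≤ 1 :=
  abs_sub_le_iff.mpr
    ⟨sub_le_iff_le_add'.mpr (coneInf_le_coneInf_add_one hk hG hp hp' h),
      sub_le_iff_le_add'.mpr (coneInf_le_coneInf_add_one hk hG hp' hp (dist_comm p p' ▸ h))⟩

end ConeInf

section FloorDivision

variable {k a b : ℤ}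

lemma fdiv_eq_of_mem_Ico (h : b ∈ Ico (k * a) (k * (a + 1))) : b.fdiv k = a := by
  have hk : 0 < k := by linarith [h.1, h.2]
  rw [Int.fdiv_eq_ediv_of_nonneg _ hk.le, Int.ediv_eq_iff_of_pos hk]
  constructor <;> linarith [h.1, h.2]

lemma fdiv_le_fdiv_add_one (hk : 0 < k) (h : a ≤ b + k) : a.fdiv k ≤ b.fdiv k + 1 := by
  rw [Int.fdiv_eq_ediv_of_nonneg _ hk.le, Int.fdiv_eq_ediv_of_nonneg _ hk.le,
    ← Int.add_mul_ediv_right b 1 hk.ne', one_mul]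
  exact Int.ediv_le_ediv hk h

lemma abs_fdiv_sub_fdiv_le_one (hk : 0 < k) (h : |a - b| ≤ k) : |a.fdiv k - b.fdiv k| ≤ 1 := by
  rw [abs_sub_le_iff] at h ⊢
  exact ⟨by linarith [fdiv_le_fdiv_add_one hk (show a ≤ b + k by linarith)],
    by linarith [fdiv_le_fdiv_add_one hk (show b ≤ a + k by linarith)]⟩

end FloorDivision

lemma dist_le_intCast_iff {m : ℕ} {p q : Fin m → ℤ} {r : ℤ} (hr : 0 ≤ r) :
    dist p q ≤ r ↔ ∀ i, |p i - q i| ≤ r := by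
  rw [dist_pi_le_iff (by exact_mod_cast hr)]
  simp only [Int.dist_eq]
  norm_cast

lemma dist_le_one_iff_adj {m : ℕ} {p q : Fin m → ℤ} : dist p q ≤ 1 ↔ adj p q := by
  exact_mod_cast dist_le_intCast_iff (p := p) (q := q) zero_le_one

lemma adj_rho_of_dist_le {m : ℕ} {p q : Fin m → ℤ} {k : ℤ} (hk : 0 < k) (h : dist p q ≤ k) :
    adj (rho k p) (rho k q) :=
  fun i => abs_fdiv_sub_fdiv_le_one hk ((dist_le_intCast_iff hk.le).mp h i)

theorem twoD_cover_exists_shift_general {m n : ℕ} (X : Set (Fin m → ℤ)) (Y : Set (Fin n → ℤ))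
    (k : ℤ) (hk : 1 ≤ k) (f : (Fin m → ℤ) → Fin n → ℤ)
    (hmaps : ∀ x ∈ X, f x ∈ Y)
    (hcont : ∀ x ∈ X, ∀ x' ∈ X, adj x x' → adj (f x) (f x')) :
    ∃ F : (Fin m → ℤ) → Fin n → ℤ,
      (∀ p ∈ Subdiv X (k + 1), F p ∈ Subdiv Y k) ∧
      (∀ p ∈ Subdiv X (k + 1), ∀ p' ∈ Subdiv X (k + 1),
        adj p p' → adj (F p) (F p')) ∧
      (∀ p ∈ Subdiv X (k + 1), rho k (F p) = f (rho (k + 1) p)) := by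
  let G (i : Fin n) (p : Fin m → ℤ) : ℤ := f (rho (k + 1) p) i
  let F (p : Fin m → ℤ) (i : Fin n) : ℤ := coneInf (Subdiv X (k + 1)) k (G i) p
  have hG (i : Fin n) : ∀ p ∈ Subdiv X (k + 1), ∀ q ∈ Subdiv X (k + 1),
      dist p q ≤ k + 1 → G i p ≤ G i q + 1 := fun p hp q hq hpq => by
    have hadj : adj (rho (k + 1) p) (rho (k + 1) q) :=
      adj_rho_of_dist_le (by linarith) (by exact_mod_cast hpq)
    exact sub_le_iff_le_add'.mp (abs_le.mp (hcont _ hp _ hq hadj i)).2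
  have hcover : ∀ p ∈ Subdiv X (k + 1), rho k (F p) = f (rho (k + 1) p) := fun p hp =>
    funext fun i => fdiv_eq_of_mem_Ico (coneInf_mem_Ico hk (hG i) hp)
  refine ⟨F, fun p hp => ?_, fun p hp p' hp' h i => ?_, hcover⟩
  · change rho k (F p) ∈ Y
    rw [hcover p hp]
    exact hmaps _ hp
  · exact abs_coneInf_sub_le_one hk (hG i) hp hp' (dist_le_one_iff_adj.mpr h)

/-- any continuous map `f : X → Y` of digital images with `X ⊆ ℤ²`
and any `k ≥ 2` admit a continuous cover `F : S(X,k+1) → S(Y,k)` with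
`ρ_k ∘ F = f ∘ ρ_{k+1}`. -/
theorem twoD_cover_exists_shift {n : ℕ} (X : Set (Fin 2 → ℤ)) (Y : Set (Fin n → ℤ))
    (hX : X.Finite) (hY : Y.Finite) (k : ℤ) (hk : 2 ≤ k)
    (f : (Fin 2 → ℤ) → Fin n → ℤ)
    (hmaps : ∀ x ∈ X, f x ∈ Y)
    (hcont : ∀ x ∈ X, ∀ x' ∈ X, adj x x' → adj (f x) (f x')) :
    ∃ F : (Fin 2 → ℤ) → Fin n → ℤ,
      (∀ p ∈ Subdiv X (k + 1), F p ∈ Subdiv Y k) ∧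
      (∀ p ∈ Subdiv X (k + 1), ∀ p' ∈ Subdiv X (k + 1),
        adj p p' → adj (F p) (F p')) ∧
      (∀ p ∈ Subdiv X (k + 1), rho k (F p) = f (rho (k + 1) p)) :=
  twoD_cover_exists_shift_general X Y k (by linarith) f hmaps hcont
end
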